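/- Let p = 108n²+1 be an odd prime. Then 2 is a cubic residue modulo p, and the two 6th-power cyclotomic classes C_0^6 and C_3^6 (each of size 18n²) form a perfect regular DSS(108n²+1, 18n², 2, 6n²). -/

import Mathlib

/-- Number of occurrences of `d` as an outer difference (difference of elements
from distinct member sets) in the family `Q`. -/
def outerCount {G ι : Type*} [AddCommGroup G] [DecidableEq G] [Fintype ι] [DecidableEq ι]
    (Q : ι → Finset G) (d : G) : ℕ :=
  ∑ i : ι, ∑ j : ι, if i = j then 0 else ((Q i ×ˢ Q j).filter (fun p => p.1 - p.2 = d)).card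

/-- Number of occurrences of `d` as an inner difference (difference of two distinct
elements of a single member set) in the family `Q`. -/
def innerCount {G ι : Type*} [AddCommGroup G] [DecidableEq G] [Fintype ι]
    (Q : ι → Finset G) (d : G) : ℕ :=
  ∑ i : ι, ((Q i ×ˢ Q i).filter (fun p => p.1 - p.2 = d ∧ p.1 ≠ p.2)).card

/-!
Let `χ` be a cubic character and `η` the quadratic character modulo `p`. If `x - y = d` with `x`
and `y` cubes of opposite quadratic character, then `t = y / x` is a cube with `η t = -1` and
`χ (1 - t) = χ d`, and `t` determines the pair. So the two classes form a perfect family as soon as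
`1 - t` is equidistributed among the three cubic classes when `t` runs over `C₃⁶`, i.e. as soon as
`∑ χ (1 - t) = 0` over `t ∈ C₃⁶`. Six times this sum is a combination of six Jacobi sums, and when
`χ 2 = 1` the duplication formula reduces it to `-2 - (J + conj J)` with `J = J(χ, χ)`.

For `p = u² + 27 v²` with `u ≡ -1 mod 3`, uniqueness of the representation `4 p = L² + 27 M²` forces
`J = u ± 3 v √-3`. Hence `J ≡ 1 mod 2`, which gives `χ 2 = 1` (Gauss), and `J + conj J = 2 u`. The
primes `108 n² + 1` are the case `u = -1`, `v = 2 n`.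
-/

open Finset

section QuadraticForm

/-- If `p` is represented by `X² + N Y²`, then `4 p` has only the obvious representation.
The bound on `N` is sharp up to `N = 4`: `28 = 1² + 3 * 3²` although `7 = 2² + 3 * 1²`. -/
theorem sq_eq_four_mul_sq_of_four_mul_prime_eq {p N u v L M : ℤ} (hp : Prime p) (hN : 5 ≤ N)
    (hpuv : p = u ^ 2 + N * v ^ 2) (hpLM : 4 * p = L ^ 2 + N * M ^ 2) :
    L ^ 2 = 4 * u ^ 2 ∧ M ^ 2 = 4 * v ^ 2 := by
  have eq_of_dvd : ∀ M : ℤ, 4 * p = L ^ 2 + N * M ^ 2 → p ∣ u * M - v * L → u * M = v * L := by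
    rintro M hM ⟨k, hk⟩
    have brahmagupta : 4 * p ^ 2 = (u * L + N * v * M) ^ 2 + N * (u * M - v * L) ^ 2 := by
      linear_combination p * hM + (L ^ 2 + N * M ^ 2) * hpuv
    have hp_sq : 0 < p ^ 2 := by have := hp.ne_zero; positivity
    have hk_zero : k = 0 := by
      by_contra hk_ne
      have : 0 < k ^ 2 := by positivity
      rw [hk] at brahmagupta
      nlinarith [sq_nonneg (u * L + N * v * M), mul_pos hp_sq this]
    rw [hk_zero, mul_zero] at hk
    linarith
  have hdvd : p ∣ (u * M - v * L) * (u * M + v * L) :=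
    ⟨M ^ 2 - 4 * v ^ 2, by linear_combination (-M ^ 2) * hpuv + v ^ 2 * hpLM⟩
  have hcross : (u * M) ^ 2 = (v * L) ^ 2 := by
    rcases hp.dvd_or_dvd hdvd with h | h
    · rw [eq_of_dvd M hpLM h]
    · have := eq_of_dvd (-M) (by rw [hpLM]; ring) (by rw [← dvd_neg]; convert h using 1; ring)
      linear_combination (v * L - u * M) * this
  have hL : L ^ 2 = 4 * u ^ 2 :=
    mul_left_cancel₀ hp.ne_zero (by
      linear_combination L ^ 2 * hpuv - N * hcross - u ^ 2 * hpLM)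
  refine ⟨hL, mul_left_cancel₀ (show N ≠ 0 by omega) ?_⟩
  linear_combination 4 * hpuv - hpLM - hL

end QuadraticForm

section CubeRootsOfUnity

theorem sq_add_self_add_one_of_isPrimitiveRoot_three {R : Type*} [CommRing R] [IsDomain R] {ω : R}
    (hω : IsPrimitiveRoot ω 3) : ω ^ 2 + ω + 1 = 0 := by
  have := hω.geom_sum_eq_zero (by norm_num)
  simp only [sum_range_succ, range_zero, sum_empty] at this
  linear_combination this

theorem exists_int_add_mul_of_mem_adjoin {R : Type*} [CommRing R] {ω z : R}
    (hω : ω ^ 2 + ω + 1 = 0) (hz : z ∈ Algebra.adjoin ℤ {ω}) : ∃ a b : ℤ, z = a + b * ω := by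
  induction hz using Algebra.adjoin_induction with
  | mem x hx => exact ⟨0, 1, by simpa using hx⟩
  | algebraMap r => exact ⟨r, 0, by simp⟩
  | add x y _ _ hx hy =>
    obtain ⟨a, b, rfl⟩ := hx
    obtain ⟨c, d, rfl⟩ := hy
    exact ⟨a + c, b + d, by push_cast; ring⟩
  | mul x y _ _ hx hy =>
    obtain ⟨a, b, rfl⟩ := hx
    obtain ⟨c, d, rfl⟩ := hy
    refine ⟨a * c - b * d, a * d + b * c - b * d, ?_⟩
    push_cast
    linear_combination (b * d : R) * hω

theorem one_add_add_inv_of_pow_three_eq_one {K : Type*} [Field K] [DecidableEq K] {w : K}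
    (hw : w ^ 3 = 1) : 1 + w + w⁻¹ = if w = 1 then 3 else 0 := by
  split_ifs with h
  · rw [h, inv_one]; norm_num
  · have hinv : w⁻¹ = w ^ 2 := inv_eq_of_mul_eq_one_right (by rw [← hw]; ring)
    refine mul_left_cancel₀ (sub_ne_zero.mpr h) ?_
    rw [hinv]
    linear_combination hw

theorem eq_one_of_pow_three_eq_one_of_eq_one_add_two_mul {K : Type*} [Field K] [CharZero K]
    {w z : K} (hw : w ^ 3 = 1) (hz : IsIntegral ℤ z) (hwz : w = 1 + 2 * z) : w = 1 := by
  by_contra hw_ne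
  have hw_quad : w ^ 2 + w + 1 = 0 :=
    mul_left_cancel₀ (sub_ne_zero.mpr hw_ne) (by linear_combination hw)
  have hint : IsIntegral ℤ (algebraMap ℚ K (3 / 2)) := by
    have hval : algebraMap ℚ K (3 / 2) = -((3 : ℤ) * z + (2 : ℤ) * z ^ 2) := by
      rw [hwz] at hw_quad
      simp only [map_div₀, map_ofNat, Int.cast_ofNat]
      linear_combination hw_quad / 2
    rw [hval]
    exact (((isIntegral_intCast 3).mul hz).add ((isIntegral_intCast 2).mul (hz.pow 2))).neg
  obtain ⟨k, hk⟩ := IsIntegrallyClosed.isIntegral_iff.mp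
    ((isIntegral_algebraMap_iff (algebraMap ℚ K).injective).mp hint)
  have : (2 * k : ℚ) = 3 := by rw [eq_intCast] at hk; rw [hk]; norm_num
  have : 2 * k = 3 := by exact_mod_cast this
  omega

end CubeRootsOfUnity

section Characters

variable {F R : Type*} [Field F] [CommRing R]

theorem mulChar_apply_generator_pow_eq_one_iff {α : Fˣ}
    (hα : ∀ x, x ∈ Subgroup.zpowers α) (χ : MulChar F R) (k : ℕ) :
    χ ((α : F) ^ k) = 1 ↔ orderOf χ ∣ k := by
  rw [orderOf_dvd_iff_pow_eq_one, MulChar.eq_iff hα, MulChar.pow_apply_coe, MulChar.one_apply_coe,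
    map_pow]

theorem ne_zero_of_mulChar_apply_eq [Nontrivial R] {χ : MulChar F R} {x y : F} (hy : y ≠ 0)
    (h : χ x = χ y) : x ≠ 0 := by
  rintro rfl
  exact (hy.isUnit.map χ).ne_zero (h.symm.trans (MulChar.map_zero χ))

theorem mulChar_apply_pow_orderOf_eq_one (χ : MulChar F R) {x : F} (hx : x ≠ 0) :
    χ x ^ orderOf χ = 1 := by
  rw [← hx.isUnit.unit_spec, ← MulChar.pow_apply_coe, pow_orderOf_eq_one, MulChar.one_apply_coe]

theorem exists_generator_pow_eq [Finite F] {α : Fˣ} (hα : ∀ x, x ∈ Subgroup.zpowers α) {x : F}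
    (hx : x ≠ 0) : ∃ k : ℕ, (α : F) ^ k = x := by
  obtain ⟨k, hk⟩ := mem_powers_iff_mem_zpowers.mpr (hα (Units.mk0 x hx))
  exact ⟨k, by simpa using congrArg Units.val hk⟩

theorem exists_pow_orderOf_eq_of_mulChar_apply_eq_one [Finite F] [Nontrivial R]
    {χ : MulChar F R} {x : F} (hx : χ x = 1) : ∃ y, y ^ orderOf χ = x := by
  have hx0 : x ≠ 0 := ne_zero_of_mulChar_apply_eq one_ne_zero (hx.trans (map_one χ).symm)
  obtain ⟨α, hα⟩ := IsCyclic.exists_generator (α := Fˣ)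
  obtain ⟨k, rfl⟩ := exists_generator_pow_eq hα hx0
  obtain ⟨m, rfl⟩ := (mulChar_apply_generator_pow_eq_one_iff hα χ k).mp hx
  exact ⟨(α : F) ^ m, by rw [← pow_mul, mul_comm]⟩

variable [Fintype F] [DecidableEq F]

theorem orderOf_quadraticChar (hF : ringChar F ≠ 2) :
    orderOf (quadraticChar F) = 2 :=
  orderOf_eq_prime (quadraticChar_isQuadratic F).sq_eq_one (quadraticChar_ne_one hF)

theorem quadraticChar_generator_pow (hF : ringChar F ≠ 2) {α : Fˣ}
    (hα : ∀ x, x ∈ Subgroup.zpowers α) (k : ℕ) : quadraticChar F ((α : F) ^ k) = (-1) ^ k := by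
  have hα_ne : quadraticChar F α ≠ 1 := by
    rw [← pow_one (α : F), ne_eq, mulChar_apply_generator_pow_eq_one_iff hα,
      orderOf_quadraticChar hF]
    norm_num
  rw [map_pow, (quadraticChar_dichotomy α.ne_zero).resolve_left hα_ne]

end Characters

section JacobiSum

variable {F R : Type*} [Field F] [Fintype F] [CommRing R]

/-- The substitution `x ↦ x⁻¹` in the Jacobi sum. -/
theorem jacobiSum_eq_neg_one_mul_jacobiSum_inv_mul (χ ψ : MulChar F R) :
    jacobiSum χ ψ = ψ (-1) * jacobiSum (χ * ψ)⁻¹ ψ := by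
  rw [jacobiSum, jacobiSum, mul_sum, ← Equiv.sum_comp (Equiv.inv F)]
  refine sum_congr rfl fun x _ => ?_
  rcases eq_or_ne x 0 with rfl | hx
  · simp [MulChar.map_zero]
  have hsub : 1 - x⁻¹ = -1 * x⁻¹ * (1 - x) := by field_simp; ring
  rw [Equiv.inv_apply, hsub, map_mul, map_mul, MulChar.inv_apply', MulChar.mul_apply]
  ring

theorem star_jacobiSum (χ ψ : MulChar F ℂ) : star (jacobiSum χ ψ) = jacobiSum χ⁻¹ ψ⁻¹ := by
  simp only [jacobiSum, star_sum, star_mul', MulChar.star_apply']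

variable [DecidableEq F]

variable (F R) in
/-- The quadratic character of `F` with values in `R` instead of `ℤ`, so that it can be
multiplied with other `R`-valued characters. -/
noncomputable def quadraticCharIn : MulChar F R :=
  (quadraticChar F).ringHomComp (Int.castRingHom R)

theorem quadraticCharIn_apply (x : F) : quadraticCharIn F R x = (quadraticChar F x : R) := rfl

theorem quadraticCharIn_inv : (quadraticCharIn F R)⁻¹ = quadraticCharIn F R :=
  ((quadraticChar_isQuadratic F).comp _).inv

theorem quadraticCharIn_mul_self : quadraticCharIn F R * quadraticCharIn F R = 1 := by
  rw [← sq]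
  exact ((quadraticChar_isQuadratic F).comp _).sq_eq_one

theorem sum_comp_sq (hF : ringChar F ≠ 2) (f : F → R) :
    ∑ u, f (u ^ 2) = ∑ w, (quadraticCharIn F R w + 1) * f w := by
  rw [← sum_fiberwise (s := univ) (g := fun u : F => u ^ 2)]
  refine sum_congr rfl fun w _ => ?_
  have hcard : (#{u : F | u ^ 2 = w} : ℤ) = quadraticChar F w + 1 := by
    rw [← quadraticChar_card_sqrts hF w, Set.toFinset_ofPred]
  rw [sum_congr rfl (g := fun _ => f w) (by simp +contextual), sum_const, nsmul_eq_mul,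
    quadraticCharIn_apply]
  congr 1
  exact_mod_cast congrArg (Int.cast (R := R)) hcard

/-- Completing the square: `4 x (1 - x) = 1 - (2 x - 1) ^ 2`. -/
theorem apply_four_mul_jacobiSum_self (hF : ringChar F ≠ 2) (χ : MulChar F R) :
    χ 4 * jacobiSum χ χ = ∑ w, (quadraticCharIn F R w + 1) * χ (1 - w) := by
  let e : F ≃ F := (Equiv.mulLeft₀ 2 (Ring.two_ne_zero hF)).trans (Equiv.subRight 1)
  rw [← sum_comp_sq hF (fun w => χ (1 - w)), jacobiSum, mul_sum,
    ← e.sum_comp (fun u => χ (1 - u ^ 2))]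
  refine sum_congr rfl fun x _ => ?_
  rw [← map_mul, ← map_mul]
  congr 1
  change 4 * (x * (1 - x)) = 1 - (2 * x - 1) ^ 2
  ring

theorem apply_four_mul_jacobiSum_self_eq_jacobiSum_quadraticCharIn [IsDomain R]
    (hF : ringChar F ≠ 2) {χ : MulChar F R} (hχ : χ ≠ 1) :
    χ 4 * jacobiSum χ χ = jacobiSum (quadraticCharIn F R) χ := by
  have hsum : ∑ x, χ (1 - x) = 0 := by
    rw [← MulChar.sum_eq_zero_of_ne_one hχ, ← (Equiv.subLeft (1 : F)).sum_comp χ]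
    rfl
  rw [apply_four_mul_jacobiSum_self hF, jacobiSum]
  simp only [add_mul, one_mul, sum_add_distrib, hsum, add_zero]

theorem apply_four_mul_jacobiSum_self_eq_one_add_two_mul (hF : ringChar F ≠ 2)
    (χ : MulChar F R) :
    χ 4 * jacobiSum χ χ = 1 + 2 * ∑ w with quadraticChar F w = 1, χ (1 - w) := by
  have hterm (w : F) : (quadraticCharIn F R w + 1) * χ (1 - w) =
      (if w = 0 then 1 else 0) + 2 * if quadraticChar F w = 1 then χ (1 - w) else 0 := by
    rw [quadraticCharIn_apply]
    rcases eq_or_ne w 0 with rfl | hw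
    · simp
    · rcases quadraticChar_dichotomy hw with h | h
      · rw [h, if_neg hw, if_pos rfl]; push_cast; ring
      · rw [h, if_neg hw, if_neg (by norm_num)]; push_cast; ring
  rw [apply_four_mul_jacobiSum_self hF, sum_congr rfl fun w _ => hterm w, sum_add_distrib,
    ← mul_sum, sum_ite_eq' univ (0 : F), if_pos (mem_univ _), ← sum_filter]

end JacobiSum

section CubicJacobiSum

variable {F R : Type*} [Field F] [Fintype F]

theorem ne_one_of_orderOf_eq_three {G : Type*} [Monoid G] {g : G} (hg : orderOf g = 3) : g ≠ 1 := by
  rintro rfl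
  simp at hg

theorem exists_jacobiSum_self_eq_of_orderOf_eq_three [CommRing R] [IsDomain R]
    {χ : MulChar F R} (hχ : orderOf χ = 3) {ω : R} (hω : IsPrimitiveRoot ω 3) :
    ∃ a b : ℤ, jacobiSum χ χ = (3 * a - 1) + 3 * b * ω := by
  have hχ3 : χ ^ 3 = 1 := hχ ▸ pow_orderOf_eq_one χ
  obtain ⟨z, hz, hJ⟩ := exists_jacobiSum_eq_neg_one_add (n := 3) (by norm_num) hχ3 hχ3
    (hχ ▸ χ.orderOf_dvd_card_sub_one) hω
  have hω2 := sq_add_self_add_one_of_isPrimitiveRoot_three hω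
  obtain ⟨c, e, rfl⟩ := exists_int_add_mul_of_mem_adjoin hω2 hz
  refine ⟨e, e - c, ?_⟩
  rw [hJ]
  push_cast
  linear_combination (c + e * ω - 3 * e) * hω2

theorem star_eq_neg_one_sub_of_isPrimitiveRoot_three {ω : ℂ} (hω : IsPrimitiveRoot ω 3) :
    star ω = -1 - ω := by
  refine mul_left_cancel₀ (hω.ne_zero (by norm_num)) ?_
  have hnorm : ω * star ω = 1 := by
    simpa [hω.norm'_eq_one (by norm_num)] using Complex.mul_conj' ω
  rw [hnorm]
  linear_combination sq_add_self_add_one_of_isPrimitiveRoot_three hω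

theorem jacobiSum_mul_star_jacobiSum_of_orderOf_eq_three {χ : MulChar F ℂ}
    (hχ : orderOf χ = 3) : jacobiSum χ χ * star (jacobiSum χ χ) = Fintype.card F := by
  have hchar : ringChar ℂ ≠ ringChar F := by
    rw [ringChar.eq ℂ 0]
    exact (CharP.ringChar_ne_zero_of_finite F).symm
  have hχ1 := ne_one_of_orderOf_eq_three hχ
  have hχ2 : χ * χ ≠ 1 := by
    rw [← sq]
    exact pow_ne_one_of_lt_orderOf two_ne_zero (by omega)
  rw [star_jacobiSum, jacobiSum_mul_jacobiSum_inv hchar hχ1 hχ1 hχ2]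

/-- Here `1 + 2 ω = ±√-3`, so that `J(χ, χ) = u ± 3 v √-3`. -/
theorem jacobiSum_self_eq_of_card_eq_sq_add_mul_sq {χ : MulChar F ℂ} (hχ : orderOf χ = 3)
    {ω : ℂ} (hω : IsPrimitiveRoot ω 3) (hp : (Fintype.card F).Prime) {u v : ℤ}
    (huv : (Fintype.card F : ℤ) = u ^ 2 + 27 * v ^ 2) (hu : u ≡ -1 [ZMOD 3]) :
    ∃ m : ℤ, m ^ 2 = v ^ 2 ∧ jacobiSum χ χ = u + 3 * m * (1 + 2 * ω) := by
  obtain ⟨a, b, hJ⟩ := exists_jacobiSum_self_eq_of_orderOf_eq_three hχ hω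
  have hnorm : (Fintype.card F : ℤ) = (3 * a - 1) ^ 2 - (3 * a - 1) * (3 * b) + (3 * b) ^ 2 := by
    have h := jacobiSum_mul_star_jacobiSum_of_orderOf_eq_three hχ
    rw [hJ] at h
    simp only [star_add, star_sub, star_mul', star_ofNat, star_intCast, star_one,
      star_eq_neg_one_sub_of_isPrimitiveRoot_three hω] at h
    have : (Fintype.card F : ℂ) = (3 * a - 1) ^ 2 - (3 * a - 1) * (3 * b) + (3 * b) ^ 2 := by
      linear_combination -h - 9 * b ^ 2 * sq_add_self_add_one_of_isPrimitiveRoot_three hω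
    exact_mod_cast this
  obtain ⟨hL, hb⟩ := sq_eq_four_mul_sq_of_four_mul_prime_eq (L := 2 * (3 * a - 1) - 3 * b)
    (M := b) (Nat.prime_iff_prime_int.mp hp) (by norm_num) huv (by rw [hnorm]; ring)
  have htrace : 2 * (3 * a - 1) - 3 * b = 2 * u := by
    have : (2 * (3 * a - 1) - 3 * b) ^ 2 = (2 * u) ^ 2 := by rw [hL]; ring
    rw [Int.modEq_iff_dvd] at hu
    rcases sq_eq_sq_iff_eq_or_eq_neg.mp this with h | h <;> omega
  obtain ⟨m, rfl⟩ : ∃ m, b = 2 * m := ⟨b / 2, by omega⟩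
  refine ⟨m, by linarith, ?_⟩
  have : (3 * a - 1 : ℂ) = u + 3 * m := by
    exact_mod_cast (show 3 * a - 1 = u + 3 * m by omega)
  rw [hJ, this]
  push_cast
  ring

theorem jacobiSum_self_add_star_of_card_eq_sq_add_mul_sq {χ : MulChar F ℂ} (hχ : orderOf χ = 3)
    (hp : (Fintype.card F).Prime) {u v : ℤ}
    (huv : (Fintype.card F : ℤ) = u ^ 2 + 27 * v ^ 2) (hu : u ≡ -1 [ZMOD 3]) :
    jacobiSum χ χ + star (jacobiSum χ χ) = 2 * u := by
  have hω := Complex.isPrimitiveRoot_exp 3 three_ne_zero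
  obtain ⟨m, -, hJ⟩ := jacobiSum_self_eq_of_card_eq_sq_add_mul_sq hχ hω hp huv hu
  rw [hJ]
  simp only [star_add, star_mul', star_ofNat, star_intCast, star_one,
    star_eq_neg_one_sub_of_isPrimitiveRoot_three hω]
  ring

theorem mulChar_apply_two_eq_one_of_jacobiSum_self_eq {K : Type*} [Field K]
    [CharZero K] (hF : ringChar F ≠ 2) {χ : MulChar F K} (hχ : orderOf χ = 3) {z : K}
    (hz : IsIntegral ℤ z) (hJ : jacobiSum χ χ = 1 + 2 * z) : χ 2 = 1 := by
  classical
  have apply_pow_three {x : F} (hx : x ≠ 0) : χ x ^ 3 = 1 :=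
    hχ ▸ mulChar_apply_pow_orderOf_eq_one χ hx
  have isIntegral_apply (x : F) : IsIntegral ℤ (χ x) := by
    rcases eq_or_ne x 0 with rfl | hx
    · rw [MulChar.map_zero]; exact isIntegral_zero
    · exact .of_pow three_pos (by rw [apply_pow_three hx]; exact isIntegral_one)
  have h2 : (2 : F) ≠ 0 := Ring.two_ne_zero hF
  have h4 : χ 4 = χ 2 ^ 2 := by rw [← map_pow]; norm_num
  have hχ4 : χ 4 = 1 := by
    refine eq_one_of_pow_three_eq_one_of_eq_one_add_two_mul
      (z := ∑ w with quadraticChar F w = 1, χ (1 - w) - χ 4 * z) ?_ ?_ ?_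
    · rw [h4, ← pow_mul, mul_comm, pow_mul, apply_pow_three h2, one_pow]
    · exact (IsIntegral.sum _ fun w _ => isIntegral_apply _).sub ((isIntegral_apply 4).mul hz)
    · have := apply_four_mul_jacobiSum_self_eq_one_add_two_mul hF χ
      rw [hJ] at this
      linear_combination this
  linear_combination apply_pow_three h2 - χ 2 * (h4.symm.trans hχ4)

theorem mulChar_apply_two_eq_one_of_card_eq_sq_add_mul_sq (hF : ringChar F ≠ 2)
    {χ : MulChar F ℂ} (hχ : orderOf χ = 3) (hp : (Fintype.card F).Prime) {u v : ℤ}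
    (huv : (Fintype.card F : ℤ) = u ^ 2 + 27 * v ^ 2) : χ 2 = 1 := by
  obtain ⟨w, hw, hwu⟩ : ∃ w : ℤ, w ≡ -1 [ZMOD 3] ∧ w ^ 2 = u ^ 2 := by
    have h3 : ¬ 3 ∣ u := by
      rintro ⟨q, rfl⟩
      have := hχ ▸ χ.orderOf_dvd_card_sub_one
      have := hp.one_lt
      ring_nf at huv
      omega
    rcases (by omega : u % 3 = 2 ∨ -u % 3 = 2) with h | h
    · exact ⟨u, h, rfl⟩
    · exact ⟨-u, h, neg_sq u⟩
  rw [← hwu] at huv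
  have hω := Complex.isPrimitiveRoot_exp 3 three_ne_zero
  obtain ⟨m, hm, hJ⟩ := jacobiSum_self_eq_of_card_eq_sq_add_mul_sq hχ hω hp huv hw
  obtain ⟨k, hk⟩ : Odd (w + 3 * m) := by
    have hodd : Odd (w ^ 2 + 27 * m ^ 2) := by
      rw [hm, ← huv]
      exact_mod_cast Nat.odd_iff.mpr (FiniteField.odd_card_of_char_ne_two hF)
    rw [← Int.not_even_iff_odd] at hodd ⊢
    simpa [Int.even_add, Int.even_mul, Int.even_pow, show ¬ Even (27 : ℤ) by decide,
      show ¬ Even (3 : ℤ) by decide] using hodd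
  refine mulChar_apply_two_eq_one_of_jacobiSum_self_eq hF hχ
    ((isIntegral_intCast k).add ((isIntegral_intCast (3 * m)).mul (hω.isIntegral three_pos))) ?_
  have hk' : (w + 3 * m : ℂ) = 2 * k + 1 := by exact_mod_cast hk
  rw [hJ]
  push_cast
  linear_combination hk'

end CubicJacobiSum

section SignedKernel

variable {F R : Type*} [Field F] [Fintype F] [DecidableEq F] [CommRing R] [DecidableEq R]

/-- The elements of the kernel of `χ` whose quadratic character is `ε`. For `χ` of order `3` and
`ε = 1, -1` these are the cyclotomic classes `C₀⁶` and `C₃⁶`. -/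
def signedKer (χ : MulChar F R) (ε : ℤ) : Finset F := {x | χ x = 1 ∧ quadraticChar F x = ε}

theorem mem_signedKer {χ : MulChar F R} {ε : ℤ} {x : F} :
    x ∈ signedKer χ ε ↔ χ x = 1 ∧ quadraticChar F x = ε := by
  simp [signedKer]

theorem ne_zero_of_mem_signedKer [Nontrivial R] {χ : MulChar F R} {ε : ℤ} {x : F}
    (hx : x ∈ signedKer χ ε) : x ≠ 0 :=
  ne_zero_of_mulChar_apply_eq one_ne_zero ((mem_signedKer.mp hx).1.trans (map_one χ).symm)

theorem disjoint_signedKer (χ : MulChar F R) {ε δ : ℤ} (h : ε ≠ δ) :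
    Disjoint (signedKer χ ε) (signedKer χ δ) :=
  disjoint_left.mpr fun _ hε hδ =>
    h ((mem_signedKer.mp hε).2.symm.trans (mem_signedKer.mp hδ).2)

theorem mul_mem_signedKer_iff {χ : MulChar F R} {ε δ : ℤ} (hε : ε * ε = 1) {x t : F}
    (hx : x ∈ signedKer χ ε) : x * t ∈ signedKer χ δ ↔ t ∈ signedKer χ (ε * δ) := by
  obtain ⟨hχx, hεx⟩ := mem_signedKer.mp hx
  rw [mem_signedKer, mem_signedKer, map_mul, map_mul, hχx, hεx, one_mul]
  refine and_congr_right fun _ => ⟨fun h => ?_, fun h => ?_⟩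
  · rw [← h, ← mul_assoc, hε, one_mul]
  · rw [h, ← mul_assoc, hε, one_mul]

theorem mem_signedKer_iff_of_mul_eq {χ : MulChar F R} {ε : ℤ} (hε : ε * ε = 1) {x u d : F}
    (hd : d ≠ 0) (hxu : x * u = d) :
    x ∈ signedKer χ ε ↔ χ u = χ d ∧ quadraticChar F u = ε * quadraticChar F d := by
  have hu : u ≠ 0 := right_ne_zero_of_mul (hxu ▸ hd)
  have hχu : χ u = χ d ↔ χ x = 1 := by
    rw [← hxu, map_mul, eq_comm, (hu.isUnit.map χ).mul_eq_right]
  have hεu : quadraticChar F u = ε * quadraticChar F d ↔ quadraticChar F x = ε := by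
    have hqu : quadraticChar F u * quadraticChar F u = 1 := by
      rw [← sq, quadraticChar_sq_one hu]
    rw [← hxu, map_mul]
    constructor <;> intro h
    · linear_combination (-ε * quadraticChar F u) * h -
        quadraticChar F x * quadraticChar F u ^ 2 * hε + (ε - quadraticChar F x) * hqu
    · rw [h, ← mul_assoc, hε, one_mul]
  rw [hχu, hεu, mem_signedKer]

/-- A pair `(x, y)` with `x - y = d` corresponds to the ratio `t = y / x`, as `x * (1 - t) = d`. -/
theorem card_filter_sub_eq_signedKer [Nontrivial R] (χ : MulChar F R) {ε : ℤ} (hε : ε * ε = 1)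
    (δ : ℤ) {d : F} (hd : d ≠ 0) :
    #{p ∈ signedKer χ ε ×ˢ signedKer χ δ | p.1 - p.2 = d} =
      #{t ∈ signedKer χ (ε * δ) | χ (1 - t) = χ d ∧
        quadraticChar F (1 - t) = ε * quadraticChar F d} := by
  refine card_nbij' (fun p => (p.2 / p.1 : F)) (fun t => (d / (1 - t), d / (1 - t) * t))
    ?_ ?_ ?_ ?_
  · rintro ⟨x, y⟩ h
    simp only [coe_filter, mem_product, Set.mem_ofPred_eq] at h ⊢
    obtain ⟨⟨hx, hy⟩, rfl⟩ := h
    have hxt : x * (y / x) = y := mul_div_cancel₀ y (ne_zero_of_mem_signedKer hx)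
    have hxd : x * (1 - y / x) = x - y := by rw [mul_sub, hxt, mul_one]
    exact ⟨(mul_mem_signedKer_iff hε hx).mp (hxt.symm ▸ hy),
      (mem_signedKer_iff_of_mul_eq hε hd hxd).mp hx⟩
  · intro t h
    simp only [coe_filter, mem_product, Set.mem_ofPred_eq] at h ⊢
    have hxd : d / (1 - t) * (1 - t) = d :=
      div_mul_cancel₀ d (ne_zero_of_mulChar_apply_eq hd h.2.1)
    have hx := (mem_signedKer_iff_of_mul_eq hε hd hxd).mpr h.2
    exact ⟨⟨hx, (mul_mem_signedKer_iff hε hx).mpr h.1⟩, by rw [← mul_one_sub, hxd]⟩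
  · rintro ⟨x, y⟩ h
    simp only [coe_filter, mem_product, Set.mem_ofPred_eq] at h ⊢
    have hxt : x * (y / x) = y := mul_div_cancel₀ y (ne_zero_of_mem_signedKer h.1.1)
    have hxd : x * (1 - y / x) = d := by rw [mul_sub, hxt, mul_one, h.2]
    have hdx : d / (1 - y / x) = x :=
      div_eq_of_eq_mul (right_ne_zero_of_mul (hxd ▸ hd)) hxd.symm
    rw [hdx, hxt]
  · intro t h
    simp only [coe_filter, Set.mem_ofPred_eq] at h ⊢
    exact mul_div_cancel_left₀ t (div_ne_zero hd (ne_zero_of_mulChar_apply_eq hd h.2.1))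

theorem outerCount_signedKer [Nontrivial R] (χ : MulChar F R) {d : F} (hd : d ≠ 0) :
    outerCount ![signedKer χ 1, signedKer χ (-1)] d =
      #{t ∈ signedKer χ (-1) | χ (1 - t) = χ d} := by
  have hpos := card_filter_sub_eq_signedKer χ (ε := 1) rfl (-1) hd
  have hneg := card_filter_sub_eq_signedKer χ (ε := -1) rfl 1 hd
  simp only [one_mul, mul_one, neg_mul] at hpos hneg
  have hsplit : #{t ∈ signedKer χ (-1) | χ (1 - t) = χ d} =
      #{t ∈ signedKer χ (-1) | χ (1 - t) = χ d ∧ quadraticChar F (1 - t) = quadraticChar F d} +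
      #{t ∈ signedKer χ (-1) | χ (1 - t) = χ d ∧
        quadraticChar F (1 - t) = -quadraticChar F d} := by
    simp only [← filter_filter]
    rw [← card_filter_add_card_filter_not (fun t => quadraticChar F (1 - t) = quadraticChar F d)]
    congr 2
    refine filter_congr fun t ht => ?_
    have ht0 := ne_zero_of_mulChar_apply_eq hd (mem_filter.mp ht).2
    rcases quadraticChar_dichotomy ht0 with h | h <;>
      rcases quadraticChar_dichotomy hd with h' | h' <;> rw [h, h'] <;> decide
  have houter : outerCount ![signedKer χ 1, signedKer χ (-1)] d =
      #{p ∈ signedKer χ 1 ×ˢ signedKer χ (-1) | p.1 - p.2 = d} +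
        #{p ∈ signedKer χ (-1) ×ˢ signedKer χ 1 | p.1 - p.2 = d} := by
    simp [outerCount, Fin.sum_univ_two]
  rw [houter, hpos, hneg, hsplit]

end SignedKernel

section Equidistribution

variable {F K : Type*} [Field F] [Fintype F] [DecidableEq F] [Field K]

theorem mul_self_eq_inv_of_orderOf_eq_three {G : Type*} [Group G] {g : G} (hg : orderOf g = 3) :
    g * g = g⁻¹ := by
  rw [eq_inv_iff_mul_eq_one, ← pow_three', ← hg, pow_orderOf_eq_one]

theorem jacobiSum_self_eq_jacobiSum_quadraticCharIn (hF : ringChar F ≠ 2) {χ : MulChar F K}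
    (hχ : χ ≠ 1) (hχ2 : χ 2 * χ 2 = 1) : jacobiSum χ χ = jacobiSum (quadraticCharIn F K) χ := by
  rw [← apply_four_mul_jacobiSum_self_eq_jacobiSum_quadraticCharIn hF hχ,
    show (4 : F) = 2 * 2 by norm_num, map_mul, hχ2, one_mul]

/-- Reflection alone fixes `J(η χ, χ)`, so it is alternated with duplication. -/
theorem jacobiSum_quadraticCharIn_mul_self (hF : ringChar F ≠ 2) {χ : MulChar F K}
    (hχ : orderOf χ = 3) (hχ2 : χ 2 = 1) :
    jacobiSum (quadraticCharIn F K * χ) χ = jacobiSum χ⁻¹ χ⁻¹ := by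
  set η := quadraticCharIn F K
  have hηη : η * η = 1 := quadraticCharIn_mul_self
  have hη_inv : η⁻¹ = η := quadraticCharIn_inv
  have hχχ : χ * χ = χ⁻¹ := mul_self_eq_inv_of_orderOf_eq_three hχ
  have hχ_inv : χ⁻¹ ≠ 1 := inv_ne_one.mpr (ne_one_of_orderOf_eq_three hχ)
  have hηχ : η * χ ≠ 1 := by
    intro h
    apply hχ_inv
    calc χ⁻¹ = η * η * (χ * χ) := by rw [hηη, hχχ, one_mul]
      _ = 1 := by rw [mul_mul_mul_comm, h, one_mul]
  have hχ_neg : χ (-1) = 1 :=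
    MulChar.val_neg_one_eq_one_of_odd_order (n := 3) (by decide) (hχ ▸ pow_orderOf_eq_one χ)
  have hη_neg : η (-1) * η (-1) = 1 := by
    rw [← MulChar.mul_apply, hηη, MulChar.one_apply isUnit_one.neg]
  have hη2 : η 2 * η 2 = 1 := by
    rw [← MulChar.mul_apply, hηη, MulChar.one_apply (Ring.two_ne_zero hF).isUnit]
  calc jacobiSum (η * χ) χ
    _ = jacobiSum χ (η * χ) := jacobiSum_comm _ _
    _ = η (-1) * jacobiSum (η * χ) (η * χ) := by
      rw [jacobiSum_eq_neg_one_mul_jacobiSum_inv_mul, MulChar.mul_apply, hχ_neg, mul_one,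
        mul_left_comm, hχχ, mul_inv, inv_inv, hη_inv]
    _ = η (-1) * jacobiSum (η * χ) η := by
      rw [jacobiSum_self_eq_jacobiSum_quadraticCharIn hF hηχ, jacobiSum_comm]
      simp only [MulChar.mul_apply, hχ2, mul_one, hη2]
    _ = η (-1) * (η (-1) * jacobiSum χ⁻¹ η) := by
      rw [jacobiSum_eq_neg_one_mul_jacobiSum_inv_mul (η * χ), mul_right_comm, hηη, one_mul]
    _ = jacobiSum η χ⁻¹ := by rw [← mul_assoc, hη_neg, one_mul, jacobiSum_comm]
    _ = jacobiSum χ⁻¹ χ⁻¹ := by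
      refine (jacobiSum_self_eq_jacobiSum_quadraticCharIn hF hχ_inv ?_).symm
      rw [← hχχ, MulChar.mul_apply, hχ2, one_mul, one_mul]

theorem six_mul_sum_signedKer_neg_one_eq_jacobiSum [DecidableEq K] {χ : MulChar F K}
    (hχ : orderOf χ = 3) :
    6 * ∑ t ∈ signedKer χ (-1), χ (1 - t) =
      jacobiSum 1 χ + jacobiSum χ χ + jacobiSum χ⁻¹ χ - jacobiSum (quadraticCharIn F K) χ -
        jacobiSum (quadraticCharIn F K * χ) χ - jacobiSum (quadraticCharIn F K * χ⁻¹) χ := by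
  have indicator (t : F) :
      (1 + χ t + (χ t)⁻¹) * (1 - quadraticCharIn F K t) * (1 : MulChar F K) t =
        if t ∈ signedKer χ (-1) then 6 else 0 := by
    rcases eq_or_ne t 0 with rfl | ht
    · simp [mem_signedKer, MulChar.map_zero]
    rw [one_add_add_inv_of_pow_three_eq_one (hχ ▸ mulChar_apply_pow_orderOf_eq_one χ ht),
      MulChar.one_apply ht.isUnit, mul_one, quadraticCharIn_apply]
    simp only [mem_signedKer]
    rcases quadraticChar_dichotomy ht with h | h <;> by_cases h1 : χ t = 1 <;>
      norm_num [h, h1]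
  have hsum : 6 * ∑ t ∈ signedKer χ (-1), χ (1 - t) =
      ∑ t, (if t ∈ signedKer χ (-1) then 6 else 0) * χ (1 - t) := by
    simp only [ite_mul, zero_mul, sum_ite_mem, univ_inter, mul_sum]
  simp only [hsum, ← indicator, jacobiSum, ← sum_add_distrib, ← sum_sub_distrib]
  refine sum_congr rfl fun t _ => ?_
  simp only [MulChar.mul_apply, MulChar.inv_apply_eq_inv']
  rcases eq_or_ne t 0 with rfl | ht
  · simp [MulChar.map_zero]
  · rw [MulChar.one_apply ht.isUnit]
    ring

theorem six_mul_sum_signedKer_neg_one (hF : ringChar F ≠ 2) {χ : MulChar F ℂ}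
    (hχ : orderOf χ = 3) (hχ2 : χ 2 = 1) :
    6 * ∑ t ∈ signedKer χ (-1), χ (1 - t) = -2 - (jacobiSum χ χ + star (jacobiSum χ χ)) := by
  have hχ1 := ne_one_of_orderOf_eq_three hχ
  have hχ_neg : χ (-1) = 1 :=
    MulChar.val_neg_one_eq_one_of_odd_order (n := 3) (by decide) (hχ ▸ pow_orderOf_eq_one χ)
  have hinv : jacobiSum χ⁻¹ χ = -1 := by
    rw [jacobiSum_comm, jacobiSum_nontrivial_inv hχ1, hχ_neg]
  have hη : jacobiSum (quadraticCharIn F ℂ) χ = jacobiSum χ χ :=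
    (jacobiSum_self_eq_jacobiSum_quadraticCharIn hF hχ1 (by rw [hχ2, one_mul])).symm
  have hηinv : jacobiSum (quadraticCharIn F ℂ * χ⁻¹) χ = jacobiSum χ χ := by
    rw [jacobiSum_eq_neg_one_mul_jacobiSum_inv_mul, inv_mul_cancel_right, quadraticCharIn_inv,
      hχ_neg, one_mul, hη]
  rw [six_mul_sum_signedKer_neg_one_eq_jacobiSum hχ, jacobiSum_one_nontrivial hχ1, hinv, hη,
    hηinv, jacobiSum_quadraticCharIn_mul_self hF hχ hχ2, star_jacobiSum]
  ring

theorem three_mul_card_filter_signedKer {χ : MulChar F ℂ} (hχ : orderOf χ = 3)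
    (hsum : ∑ t ∈ signedKer χ (-1), χ (1 - t) = 0) {d : F} (hd : d ≠ 0) :
    3 * #{t ∈ signedKer χ (-1) | χ (1 - t) = χ d} = #(signedKer χ (-1)) := by
  have apply_pow_three {x : F} (hx : x ≠ 0) : χ x ^ 3 = 1 :=
    hχ ▸ mulChar_apply_pow_orderOf_eq_one χ hx
  have hd0 : χ d ≠ 0 := (hd.isUnit.map χ).ne_zero
  have indicator {t : F} (ht : t ∈ signedKer χ (-1)) :
      (if χ (1 - t) = χ d then 3 else 0) =
        1 + χ (1 - t) * (χ d)⁻¹ + star (χ (1 - t)) * χ d := by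
    have ht1 : 1 - t ≠ 0 := by
      rw [sub_ne_zero]
      rintro rfl
      simp [mem_signedKer] at ht
    have hw : (χ (1 - t) * (χ d)⁻¹) ^ 3 = 1 := by
      rw [mul_pow, inv_pow, apply_pow_three ht1, apply_pow_three hd, inv_one, one_mul]
    rw [MulChar.star_apply', MulChar.inv_apply_eq_inv', ← inv_inv (χ d), ← mul_inv, inv_inv (χ d),
      one_add_add_inv_of_pow_three_eq_one hw]
    simp only [mul_inv_eq_one₀ hd0]
  have hcast : (3 * #{t ∈ signedKer χ (-1) | χ (1 - t) = χ d} : ℂ) = #(signedKer χ (-1)) := by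
    rw [mul_comm, ← nsmul_eq_mul, ← sum_const, sum_filter, sum_congr rfl fun t ht => indicator ht]
    simp only [sum_add_distrib, ← sum_mul, ← star_sum, hsum, star_zero, zero_mul, add_zero,
      sum_const, nsmul_eq_mul, mul_one]
  exact_mod_cast hcast

end Equidistribution

section CyclotomicClasses

theorem coe_pow_eq_coe_pow_iff_modEq {M : Type*} [Monoid M] {α : Mˣ} {a b : ℕ} :
    (α : M) ^ a = (α : M) ^ b ↔ a ≡ b [MOD orderOf α] := by
  rw [← pow_eq_pow_iff_modEq, ← Units.val_inj, Units.val_pow_eq_pow_val, Units.val_pow_eq_pow_val]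

variable {F : Type*} [Field F] [DecidableEq F]

/-- The cyclotomic class `Cᵢᵉ = {α ^ (i + e t) : 0 ≤ t < m}` of order `e`, for a generator `α` of
the group of units, which has order `e m`. -/
def cyclotomicClass (α : Fˣ) (e m i : ℕ) : Finset F :=
  (range m).image fun t => (α : F) ^ (i + e * t)

theorem card_cyclotomicClass {α : Fˣ} {e m : ℕ} (he : 0 < e) (hα : orderOf α = e * m) (i : ℕ) :
    #(cyclotomicClass α e m i) = m := by
  rw [cyclotomicClass, card_image_of_injOn, card_range]
  intro a ha b hb hab
  simp only [coe_range, Set.mem_Iio] at ha hb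
  rw [coe_pow_eq_coe_pow_iff_modEq, hα] at hab
  have := (Nat.ModEq.add_left_cancel' i hab).mul_left_cancel' he.ne'
  exact this.eq_of_lt_of_lt ha hb

theorem pow_mem_cyclotomicClass_iff {α : Fˣ} {e m i : ℕ} (hm : 0 < m) (hi : i < e)
    (hα : orderOf α = e * m) {k : ℕ} :
    (α : F) ^ k ∈ cyclotomicClass α e m i ↔ k % e = i := by
  simp only [cyclotomicClass, mem_image, mem_range, coe_pow_eq_coe_pow_iff_modEq, hα]
  constructor
  · rintro ⟨t, -, ht⟩
    have h : i + e * t ≡ k [MOD e] := ht.of_mul_right m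
    rw [Nat.ModEq, Nat.add_mul_mod_self_left, Nat.mod_eq_of_lt hi] at h
    exact h.symm
  · rintro rfl
    refine ⟨k % (e * m) / e, Nat.div_lt_of_lt_mul (Nat.mod_lt _ (Nat.mul_pos (by omega) hm)), ?_⟩
    rw [← Nat.mod_mul_right_mod k e m, Nat.mod_add_div]
    exact Nat.mod_modEq _ _

theorem cyclotomicClass_six_eq_signedKer [Fintype F] {R : Type*} [CommRing R] [Nontrivial R]
    [DecidableEq R] (hF : ringChar F ≠ 2) {χ : MulChar F R} (hχ : orderOf χ = 3) {α : Fˣ}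
    (hα : ∀ x, x ∈ Subgroup.zpowers α) {m i : ℕ} (hm : 0 < m) (hαm : orderOf α = 6 * m)
    (hi : i < 2) : cyclotomicClass α 6 m (3 * i) = signedKer χ ((-1) ^ i) := by
  ext x
  rcases eq_or_ne x 0 with rfl | hx
  · simp [cyclotomicClass, mem_signedKer, MulChar.map_zero]
  obtain ⟨k, rfl⟩ := exists_generator_pow_eq hα hx
  have hparity : (-1 : ℤ) ^ k = (-1) ^ i ↔ k % 2 = i := by
    rw [neg_one_pow_eq_pow_mod_two]
    have := Nat.mod_lt k two_pos
    interval_cases k % 2 <;> interval_cases i <;> simp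
  rw [pow_mem_cyclotomicClass_iff hm (by omega) hαm, mem_signedKer,
    mulChar_apply_generator_pow_eq_one_iff hα, hχ, quadraticChar_generator_pow hF hα, hparity]
  omega

end CyclotomicClasses

theorem three_mul_outerCount_signedKer {F : Type*} [Field F] [Fintype F] [DecidableEq F]
    (hF : ringChar F ≠ 2) {χ : MulChar F ℂ} (hχ : orderOf χ = 3) (hp : (Fintype.card F).Prime)
    {v : ℤ} (hv : (Fintype.card F : ℤ) = 1 ^ 2 + 27 * v ^ 2) {d : F} (hd : d ≠ 0) :
    3 * outerCount ![signedKer χ 1, signedKer χ (-1)] d = #(signedKer χ (-1)) := by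
  have hχ2 := mulChar_apply_two_eq_one_of_card_eq_sq_add_mul_sq hF hχ hp hv
  have htrace := jacobiSum_self_add_star_of_card_eq_sq_add_mul_sq (u := -1) hχ hp hv rfl
  have hsum := six_mul_sum_signedKer_neg_one hF hχ hχ2
  rw [htrace] at hsum
  rw [outerCount_signedKer χ hd]
  exact three_mul_card_filter_signedKer hχ (by linear_combination (1 / 6) * hsum) hd

theorem stmt_11 (n p : ℕ) (hp : p = 108 * n ^ 2 + 1) (hprime : p.Prime) (hodd : Odd p)
    (α : (ZMod p)ˣ) (hα : ∀ x : (ZMod p)ˣ, x ∈ Subgroup.zpowers α) :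
    -- the 6th-power cyclotomic classes C_i^6 = {α^(i+6t) : 0 ≤ t < 18n²}
    let C : ℕ → Finset (ZMod p) := fun i =>
      (Finset.range (18 * n ^ 2)).image (fun t => ((α : ZMod p)) ^ (i + 6 * t))
    -- 2 is a cubic residue modulo p, and
    -- {C_0^6, C_3^6} is a perfect regular DSS(108n²+1, 18n², 2, 6n²)
    (∃ y : ZMod p, y ^ 3 = 2) ∧
    (C 0).card = 18 * n ^ 2 ∧ (C 3).card = 18 * n ^ 2 ∧ Disjoint (C 0) (C 3) ∧
    (∀ d : ZMod p, d ≠ 0 → outerCount ![C 0, C 3] d = 6 * n ^ 2) := by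
  intro C
  have : Fact p.Prime := ⟨hprime⟩
  have hn : 0 < 18 * n ^ 2 := by have := hprime.one_lt; omega
  have hF : ringChar (ZMod p) ≠ 2 := by rw [ZMod.ringChar_zmod_n]; omega
  have hα_order : orderOf α = 6 * (18 * n ^ 2) := by
    rw [orderOf_eq_card_of_forall_mem_zpowers hα, Nat.card_eq_fintype_card, ZMod.card_units]
    omega
  have hcard_prime : (Fintype.card (ZMod p)).Prime := (ZMod.card p).symm ▸ hprime
  have hcard : (Fintype.card (ZMod p) : ℤ) = 1 ^ 2 + 27 * (2 * n) ^ 2 := by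
    rw [ZMod.card, hp]; push_cast; ring
  obtain ⟨χ, hχ⟩ := MulChar.exists_mulChar_orderOf (ZMod p) (n := 3)
    (by rw [ZMod.card]; omega) (Complex.isPrimitiveRoot_exp 3 three_ne_zero)
  have hχ2 := mulChar_apply_two_eq_one_of_card_eq_sq_add_mul_sq hF hχ hcard_prime hcard
  have hC0 : C 0 = signedKer χ 1 := cyclotomicClass_six_eq_signedKer hF hχ hα hn hα_order two_pos
  have hC3 : C 3 = signedKer χ (-1) :=
    cyclotomicClass_six_eq_signedKer hF hχ hα hn hα_order one_lt_two
  have hC_card : ∀ i, #(C i) = 18 * n ^ 2 := card_cyclotomicClass (by norm_num) hα_order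
  refine ⟨hχ ▸ exists_pow_orderOf_eq_of_mulChar_apply_eq_one hχ2, hC_card 0, hC_card 3,
    hC0 ▸ hC3 ▸ disjoint_signedKer χ (by norm_num), fun d hd => ?_⟩
  have := three_mul_outerCount_signedKer hF hχ hcard_prime hcard hd
  rw [← hC0, ← hC3, hC_card] at this
  omega
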